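/- For every ε > 0 there exists a nonzero smooth compactly supported function ξ: (0,∞) → ℝ such that (1/(4+ε)) ∫₀^∞ ξ'(ρ)²/ρ³ dρ < ∫₀^∞ ξ(ρ)²/ρ⁵ dρ. In other words, the constant 1/4 in the Hardy-type inequality ∫ ξ²/ρ⁵ ≤ C ∫ (ξ')²/ρ³ is optimal. -/

import Mathlib

open Real MeasureTheory Set

/-!
Substituting `ξ ρ = ρ ^ α * ψ (log ρ)` and `ρ = exp t` removes the weights: the two integrals become
`∫ (α * ψ + ψ') ^ 2` and `∫ ψ ^ 2` over the whole line. The cross term `2 * α * ∫ ψ * ψ'` vanishes,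
so the quotient is `α ^ 2 + (∫ ψ' ^ 2) / ∫ ψ ^ 2`, and the second summand can be made arbitrarily
small by stretching `ψ`.
-/

/-- The Emden–Fowler transform `ρ ↦ ρ ^ α * ψ (log ρ)`, on the half-line `(0, ∞)`, of a function `ψ`
on the line. It turns the weighted integrals of Hardy's inequality into unweighted ones. It is
extended by zero to the nonpositive reals. -/
noncomputable def emdenFowler (α : ℝ) (ψ : ℝ → ℝ) : ℝ → ℝ :=
  (Ioi 0).indicator fun ρ => ρ ^ α * ψ (log ρ)

section EmdenFowler

variable {α ρ : ℝ} {ψ : ℝ → ℝ}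

theorem emdenFowler_of_pos (hρ : 0 < ρ) : emdenFowler α ψ ρ = ρ ^ α * ψ (log ρ) :=
  indicator_of_mem hρ _

theorem emdenFowler_eventuallyEq_of_pos (hρ : 0 < ρ) :
    emdenFowler α ψ =ᶠ[nhds ρ] fun x => x ^ α * ψ (log x) :=
  (eqOn_indicator (s := Ioi 0)).eventuallyEq_of_mem (Ioi_mem_nhds hρ)

theorem deriv_emdenFowler (hρ : 0 < ρ) (hψ : DifferentiableAt ℝ ψ (log ρ)) :
    deriv (emdenFowler α ψ) ρ = emdenFowler (α - 1) (fun t => α * ψ t + deriv ψ t) ρ := by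
  have hasDerivAt_rpow : HasDerivAt (fun x => x ^ α) (α * ρ ^ (α - 1)) ρ :=
    hasDerivAt_rpow_const (Or.inl hρ.ne')
  have hasDerivAt_comp_log : HasDerivAt (fun x => ψ (log x)) (deriv ψ (log ρ) * ρ⁻¹) ρ :=
    hψ.hasDerivAt.comp ρ (hasDerivAt_log hρ.ne')
  rw [(emdenFowler_eventuallyEq_of_pos hρ).deriv_eq,
    (hasDerivAt_rpow.fun_mul hasDerivAt_comp_log).deriv, emdenFowler_of_pos hρ,
    rpow_sub_one hρ.ne']
  ring

theorem tsupport_emdenFowler_subset (hc : HasCompactSupport ψ) :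
    tsupport (emdenFowler α ψ) ⊆ exp '' tsupport ψ := by
  refine closure_minimal (fun ρ hρ => ?_) (hc.isCompact.image continuous_exp).isClosed
  have hρ_pos : 0 < ρ := mem_of_indicator_ne_zero hρ
  rw [Function.mem_support, emdenFowler_of_pos hρ_pos] at hρ
  exact ⟨log ρ, subset_tsupport ψ (right_ne_zero_of_mul hρ), exp_log hρ_pos⟩

theorem tsupport_emdenFowler_subset_Ioi (hc : HasCompactSupport ψ) :
    tsupport (emdenFowler α ψ) ⊆ Ioi 0 :=
  (tsupport_emdenFowler_subset hc).trans (image_subset_iff.2 fun t _ => exp_pos t)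

theorem hasCompactSupport_emdenFowler (hc : HasCompactSupport ψ) :
    HasCompactSupport (emdenFowler α ψ) :=
  (hc.isCompact.image continuous_exp).of_isClosed_subset (isClosed_tsupport _)
    (tsupport_emdenFowler_subset hc)

theorem contDiff_emdenFowler {n : WithTop ℕ∞} (hψ : ContDiff ℝ n ψ) (hc : HasCompactSupport ψ) :
    ContDiff ℝ n (emdenFowler α ψ) := by
  refine contDiff_iff_contDiffAt.2 fun ρ => ?_
  by_cases hρ : ρ ∈ tsupport (emdenFowler α ψ)
  · have hρ_pos : 0 < ρ := tsupport_emdenFowler_subset_Ioi hc hρ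
    exact ((contDiffAt_rpow_const_of_ne hρ_pos.ne').mul
      (hψ.contDiffAt.comp ρ (contDiffAt_log.2 hρ_pos.ne'))).congr_of_eventuallyEq
        (emdenFowler_eventuallyEq_of_pos hρ_pos)
  · exact contDiffAt_const.congr_of_eventuallyEq (notMem_tsupport_iff_eventuallyEq.1 hρ)

theorem integral_Ioi_eq_integral_exp_smul {E : Type*} [NormedAddCommGroup E] [NormedSpace ℝ E]
    (f : ℝ → E) : ∫ ρ in Ioi 0, f ρ = ∫ t, exp t • f (exp t) := by
  have h := integral_image_eq_integral_deriv_smul_of_monotoneOn MeasurableSet.univ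
    (fun t _ => (hasDerivAt_exp t).hasDerivWithinAt) (exp_monotone.monotoneOn univ) f
  rwa [image_univ, range_exp, setIntegral_univ] at h

theorem integral_sq_emdenFowler_div (α : ℝ) (ψ : ℝ → ℝ) :
    ∫ ρ in Ioi 0, emdenFowler α ψ ρ ^ 2 / ρ ^ (2 * α + 1) = ∫ t, ψ t ^ 2 := by
  rw [integral_Ioi_eq_integral_exp_smul]
  congr 1 with t
  have exp_rpow : exp t ^ (2 * α + 1) = (exp t ^ α) ^ 2 * exp t := by
    rw [rpow_add_one (exp_ne_zero t), mul_comm 2 α, rpow_mul (exp_pos t).le, rpow_two]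
  rw [emdenFowler_of_pos (exp_pos t), log_exp, exp_rpow, smul_eq_mul]
  field_simp

end EmdenFowler

theorem integral_sq_const_mul_add_deriv {ψ ψ' : ℝ → ℝ} (hψ : ∀ t, HasDerivAt ψ (ψ' t) t)
    (hL2 : MemLp ψ 2) (hL2' : MemLp ψ' 2) (α : ℝ) :
    ∫ t, (α * ψ t + ψ' t) ^ 2 = α ^ 2 * (∫ t, ψ t ^ 2) + ∫ t, ψ' t ^ 2 := by
  have hint : Integrable fun t => ψ t * ψ' t := hL2.integrable_mul hL2'
  have cross_eq_zero : ∫ t, ψ t * ψ' t = 0 := by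
    have by_parts := integral_mul_deriv_eq_deriv_mul_of_integrable
      (fun t _ => hψ t) (fun t _ => hψ t) hint
      (hL2'.integrable_mul hL2) (hL2.integrable_mul hL2)
    simp only [mul_comm (ψ' _)] at by_parts
    linarith
  calc ∫ t, (α * ψ t + ψ' t) ^ 2
      = ∫ t, (α ^ 2 * ψ t ^ 2 + 2 * α * (ψ t * ψ' t) + ψ' t ^ 2) := by
        congr 1 with t
        ring
    _ = α ^ 2 * (∫ t, ψ t ^ 2) + 2 * α * (∫ t, ψ t * ψ' t) + ∫ t, ψ' t ^ 2 := by
        rw [integral_add ((hL2.integrable_sq.const_mul _).fun_add (hint.const_mul _))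
          hL2'.integrable_sq, integral_add (hL2.integrable_sq.const_mul _) (hint.const_mul _),
          integral_const_mul, integral_const_mul]
    _ = α ^ 2 * (∫ t, ψ t ^ 2) + ∫ t, ψ' t ^ 2 := by rw [cross_eq_zero, mul_zero, add_zero]

theorem integral_sq_deriv_emdenFowler_div {ψ : ℝ → ℝ} (hψ : Differentiable ℝ ψ)
    (hL2 : MemLp ψ 2) (hL2' : MemLp (deriv ψ) 2) (α : ℝ) :
    ∫ ρ in Ioi 0, deriv (emdenFowler α ψ) ρ ^ 2 / ρ ^ (2 * α - 1) =
      α ^ 2 * (∫ t, ψ t ^ 2) + ∫ t, deriv ψ t ^ 2 := by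
  rw [← integral_sq_const_mul_add_deriv (fun t => (hψ t).hasDerivAt) hL2 hL2' α,
    ← integral_sq_emdenFowler_div (α - 1)]
  refine setIntegral_congr_fun measurableSet_Ioi fun ρ hρ => ?_
  rw [deriv_emdenFowler hρ (hψ _), show 2 * α - 1 = 2 * (α - 1) + 1 by ring]

theorem exists_integral_sq_deriv_comp_mul_left_lt {φ : ℝ → ℝ} (hφ : 0 < ∫ t, φ t ^ 2) {ε : ℝ}
    (hε : 0 < ε) :
    ∃ δ > 0, ∫ t, deriv (fun s => φ (δ * s)) t ^ 2 < ε * ∫ t, φ (δ * t) ^ 2 := by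
  obtain ⟨c, hc, hc_lt⟩ := exists_pos_mul_lt (mul_pos hε hφ) (∫ t, deriv φ t ^ 2)
  refine ⟨√c, sqrt_pos.2 hc, ?_⟩
  simp only [deriv_comp_mul_left, smul_eq_mul, mul_pow, integral_const_mul, sq_sqrt hc.le]
  rw [Measure.integral_comp_mul_left (fun t => deriv φ t ^ 2),
    Measure.integral_comp_mul_left (fun t => φ t ^ 2), smul_eq_mul, smul_eq_mul,
    mul_left_comm, mul_left_comm ε]
  exact mul_lt_mul_of_pos_left (by linarith) (by positivity)

theorem exists_contDiff_integral_sq_deriv_lt {ε : ℝ} (hε : 0 < ε) :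
    ∃ ψ : ℝ → ℝ, ContDiff ℝ (⊤ : ℕ∞) ψ ∧ HasCompactSupport ψ ∧
      ∫ t, deriv ψ t ^ 2 < ε * ∫ t, ψ t ^ 2 := by
  obtain ⟨φ⟩ : Nonempty (ContDiffBump (0 : ℝ)) := inferInstance
  have hφ_pos : 0 < ∫ t, φ t ^ 2 :=
    (φ.continuous.pow 2).integral_pos_of_hasCompactSupport_nonneg_nonzero (x := 0)
      (φ.hasCompactSupport.comp_left (zero_pow two_ne_zero)) (fun _ => sq_nonneg _)
      (pow_ne_zero 2 (φ.pos_of_mem_ball (Metric.mem_ball_self φ.rOut_pos)).ne')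
  obtain ⟨δ, hδ, hlt⟩ := exists_integral_sq_deriv_comp_mul_left_lt hφ_pos hε
  have hc : HasCompactSupport fun t => φ (δ * t) := by
    simpa only [smul_eq_mul] using φ.hasCompactSupport.comp_smul hδ.ne'
  exact ⟨fun t => φ (δ * t), φ.contDiff.comp (contDiff_const.mul contDiff_id), hc, hlt⟩

theorem hardy_constant_optimal_general (α : ℝ) {ε : ℝ} (hε : 0 < ε) :
    ∃ ξ : ℝ → ℝ,
      ContDiff ℝ (⊤ : ℕ∞) ξ ∧ HasCompactSupport ξ ∧ tsupport ξ ⊆ Ioi 0 ∧ ξ ≠ 0 ∧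
      (1 / (α ^ 2 + ε)) * ∫ ρ in Ioi (0 : ℝ), deriv ξ ρ ^ 2 / ρ ^ (2 * α - 1)
        < ∫ ρ in Ioi (0 : ℝ), ξ ρ ^ 2 / ρ ^ (2 * α + 1) := by
  obtain ⟨ψ, hψ, hc, hlt⟩ := exists_contDiff_integral_sq_deriv_lt hε
  have hL2 : MemLp ψ 2 := hψ.continuous.memLp_of_hasCompactSupport hc
  have hL2' : MemLp (deriv ψ) 2 :=
    (hψ.continuous_deriv (by simp)).memLp_of_hasCompactSupport hc.deriv
  have hardy_lt : (1 / (α ^ 2 + ε)) *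
      ∫ ρ in Ioi (0 : ℝ), deriv (emdenFowler α ψ) ρ ^ 2 / ρ ^ (2 * α - 1)
        < ∫ ρ in Ioi (0 : ℝ), emdenFowler α ψ ρ ^ 2 / ρ ^ (2 * α + 1) := by
    rw [integral_sq_deriv_emdenFowler_div (hψ.differentiable (by simp)) hL2 hL2',
      integral_sq_emdenFowler_div, one_div, inv_mul_lt_iff₀ (by positivity)]
    linarith
  refine ⟨emdenFowler α ψ, contDiff_emdenFowler hψ hc, hasCompactSupport_emdenFowler hc,
    tsupport_emdenFowler_subset_Ioi hc, fun h => ?_, hardy_lt⟩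
  simp [h] at hardy_lt

theorem hardy_constant_optimal :
    ∀ ε > (0:ℝ), ∃ ξ : ℝ → ℝ,
      ContDiff ℝ (⊤ : ℕ∞) ξ ∧ HasCompactSupport ξ ∧ tsupport ξ ⊆ Set.Ioi 0 ∧
      ξ ≠ 0 ∧
      (1 / (4 + ε)) * ∫ ρ in Set.Ioi (0:ℝ), (deriv ξ ρ) ^ 2 / ρ ^ 3
        < ∫ ρ in Set.Ioi (0:ℝ), (ξ ρ) ^ 2 / ρ ^ 5 := by
  intro ε hε
  simpa only [show (2 : ℝ) ^ 2 = 4 by norm_num, show (2 : ℝ) * 2 - 1 = (3 : ℕ) by norm_num,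
    show (2 : ℝ) * 2 + 1 = (5 : ℕ) by norm_num, rpow_natCast]
    using hardy_constant_optimal_general 2 hε
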